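/- arXiv:1508.05840 — 3 statements merged into one kernel-verified Lean document; each statement's English description precedes it below -/
import Mathlib

section
/- Let F be a field of characteristic 0, ι a type with at least two elements and a distinguished element i₀, and let V be the set of finitely supported functions ι → F. Let y = {s ∈ V : s(i₀) + 1 = Σ_{i ≠ i₀} s(i)} (a finite sum since s is finitely supported). Let B be the smallest collection of subsets of V that contains y, the singleton {s} for every s ∈ y, and every relativized diagonal D_{ij} ∩ V (i, j ∈ ι), and that is closed under binary intersection, complementation relative to V, and every cylindrification C_i (i ∈ ι) (note C_i X ⊆ V whenever X ⊆ V, since changing one coordinate preserves finite support). Then {t} ∈ B for every t ∈ V; consequently B is atomic with atoms exactly the singletons {t}, t ∈ V, and if moreover |ι| ≤ |F| then |B| = |F|. -/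
universe u

/-- The cylindrification `C_i X = {s ∈ ^ιU : ∃ t ∈ X, t j = s j for all j ≠ i}`. -/
def Cyl {U ι : Type*} (i : ι) (X : Set (ι → U)) : Set (ι → U) :=
  {s | ∃ t ∈ X, ∀ j, j ≠ i → t j = s j}

/-- The diagonal `D_{ij} = {s ∈ ^ιU : s i = s j}`. -/
def Diag (U ι : Type*) (i j : ι) : Set (ι → U) :=
  {s | s i = s j}

/-- The unit `V` of the weak set algebra: all finitely supported functions `ι → F`. -/
def weakUnit (F ι : Type*) [Zero F] : Set (ι → F) :=
  {s | (Function.support s).Finite}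

/-- The distinguished generator `y = {s ∈ V : s i₀ + 1 = ∑_{i ≠ i₀} s i}`. -/
def yset (F ι : Type*) [Field F] (i₀ : ι) : Set (ι → F) :=
  {s | s ∈ weakUnit F ι ∧ s i₀ + 1 = ∑ᶠ i ∈ {i : ι | i ≠ i₀}, s i}

/-- `Gen F ι i₀ X` says that `X` belongs to the smallest collection of subsets of the unit `V`
containing `y`, the singleton `{s}` for every `s ∈ y`, and every relativized diagonal
`D_{ij} ∩ V`, and closed under binary intersections, complements relative to `V`, and all
cylindrifications. -/
inductive Gen (F ι : Type*) [Field F] (i₀ : ι) : Set (ι → F) → Prop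
  | y : Gen F ι i₀ (yset F ι i₀)
  | sing (s : ι → F) (hs : s ∈ yset F ι i₀) : Gen F ι i₀ {s}
  | diag (i j : ι) : Gen F ι i₀ (Diag F ι i j ∩ weakUnit F ι)
  | inter {X Y : Set (ι → F)} : Gen F ι i₀ X → Gen F ι i₀ Y → Gen F ι i₀ (X ∩ Y)
  | compl {X : Set (ι → F)} : Gen F ι i₀ X → Gen F ι i₀ (weakUnit F ι \ X)
  | cyl (i : ι) {X : Set (ι → F)} : Gen F ι i₀ X → Gen F ι i₀ (Cyl i X)

/-! Every coordinate line `C_i {t}` with `t ∈ V` meets the hyperplane `y`, in a point `u` say, so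
that `C_i {t} = C_i {u} ∈ B`. Two lines through `t` in different directions meet only in `t`, so
`{t} ∈ B`, and any family of subsets of `V` containing all singletons of points of `V` is atomic.
For the cardinality, `|V| ≤ |B|` because of the singletons, while `B` is generated by at most
`1 + |V| + |ι|²` sets under `|ι| + 2` finitary operations, and `|ι| ≤ |V|`. -/

universe v

open Cardinal Function

section Atoms

variable {α : Type*} {P : Set α → Prop} {V : Set α}

/-- `A` is an atom of the family of all sets satisfying `P`, that is, a minimal nonempty member.
It is spelled out rather than phrased with `Minimal`, so that it unfolds to the wording of the
final theorem. -/
def IsAtomOf (P : Set α → Prop) (A : Set α) : Prop :=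
  P A ∧ A.Nonempty ∧ ∀ Y, P Y → Y ⊆ A → Y = ∅ ∨ Y = A

theorem isAtomOf_singleton {a : α} (ha : P {a}) : IsAtomOf P {a} :=
  ⟨ha, Set.singleton_nonempty a, fun _ _ hY => Set.subset_singleton_iff_eq.1 hY⟩

theorem exists_isAtomOf_subset (hV : ∀ X, P X → X ⊆ V) (hP : ∀ a ∈ V, P {a}) {X : Set α}
    (hX : P X) (hne : X.Nonempty) : ∃ A, IsAtomOf P A ∧ A ⊆ X := by
  obtain ⟨a, ha⟩ := hne
  exact ⟨{a}, isAtomOf_singleton (hP a (hV X hX ha)), Set.singleton_subset_iff.2 ha⟩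

theorem isAtomOf_iff_exists_singleton (hV : ∀ X, P X → X ⊆ V) (hP : ∀ a ∈ V, P {a})
    {X : Set α} : IsAtomOf P X ↔ ∃ a ∈ V, X = {a} := by
  constructor
  · rintro ⟨hX, ⟨a, ha⟩, hmin⟩
    have haV : a ∈ V := hV X hX ha
    have : {a} = X := (hmin {a} (hP a haV) (Set.singleton_subset_iff.2 ha)).resolve_left
      (Set.singleton_ne_empty a)
    exact ⟨a, haV, this.symm⟩
  · rintro ⟨a, ha, rfl⟩
    exact isAtomOf_singleton (hP a ha)

end Atoms

section Cylindrification

variable {U ι : Type*}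

theorem mem_cyl_iff_exists_update [DecidableEq ι] {i : ι} {X : Set (ι → U)} {s : ι → U} :
    s ∈ Cyl i X ↔ ∃ c, update s i c ∈ X := by
  constructor
  · rintro ⟨t, ht, hts⟩
    have : t = update s i (t i) := eq_update_iff.2 ⟨rfl, hts⟩
    exact ⟨t i, this ▸ ht⟩
  · rintro ⟨c, hc⟩
    exact ⟨_, hc, fun _ hj => update_of_ne hj c s⟩

theorem mem_cyl_singleton {i : ι} {s t : ι → U} : s ∈ Cyl i {t} ↔ ∀ j, j ≠ i → t j = s j := by
  simp only [Cyl, Set.mem_singleton_iff, exists_eq_left, Set.mem_ofPred_eq]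

theorem cyl_singleton_update [DecidableEq ι] (t : ι → U) (i : ι) (c : U) :
    Cyl i {update t i c} = Cyl i {t} := by
  ext s
  rw [mem_cyl_singleton, mem_cyl_singleton]
  exact forall₂_congr fun j hj => by rw [update_of_ne hj]

theorem cyl_singleton_inter_cyl_singleton {i k : ι} (hik : i ≠ k) (t : ι → U) :
    Cyl i {t} ∩ Cyl k {t} = {t} := by
  ext s
  rw [Set.mem_inter_iff, mem_cyl_singleton, mem_cyl_singleton, Set.mem_singleton_iff]
  constructor
  · rintro ⟨hi, hk⟩
    funext j
    obtain hj | rfl := ne_or_eq j i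
    · exact (hi j hj).symm
    · exact (hk j hik).symm
  · rintro rfl
    exact ⟨fun _ _ => rfl, fun _ _ => rfl⟩

end Cylindrification

section FinitarySums

variable {M ι : Type*} [AddCommMonoid M] [DecidableEq ι]

theorem finsum_mem_update_of_notMem {S : Set ι} {i : ι} (hi : i ∉ S) (t : ι → M) (c : M) :
    ∑ᶠ j ∈ S, update t i c j = ∑ᶠ j ∈ S, t j :=
  finsum_mem_congr rfl fun _ hj => update_of_ne (ne_of_mem_of_not_mem hj hi) c t

theorem finsum_mem_update_of_mem {S : Set ι} {i : ι} (hi : i ∈ S) {t : ι → M}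
    (ht : (support t).Finite) (c : M) :
    ∑ᶠ j ∈ S, update t i c j = c + ∑ᶠ j ∈ S \ {i}, t j := by
  have hfin : ((S \ {i}) ∩ support (update t i c)).Finite := by
    refine ht.subset fun j ⟨hjS, hj⟩ => ?_
    rwa [mem_support, update_of_ne hjS.2] at hj
  have hiS : i ∉ S \ {i} := fun h => h.2 rfl
  calc ∑ᶠ j ∈ S, update t i c j = ∑ᶠ j ∈ insert i (S \ {i}), update t i c j := by
        rw [Set.insert_sdiff_singleton, Set.insert_eq_of_mem hi]
    _ = c + ∑ᶠ j ∈ S \ {i}, t j := by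
        rw [finsum_mem_insert' _ hiS hfin, update_self, finsum_mem_update_of_notMem hiS]

end FinitarySums

section WeakUnit

variable {F : Type u} {ι : Type v}

theorem update_mem_weakUnit_iff [Zero F] [DecidableEq ι] {t : ι → F} {i : ι} {c : F} :
    update t i c ∈ weakUnit F ι ↔ t ∈ weakUnit F ι := by
  have update_mem {s : ι → F} (d : F) (hs : s ∈ weakUnit F ι) : update s i d ∈ weakUnit F ι := by
    refine (hs.insert i).subset fun j hj => or_iff_not_imp_left.2 fun hji => ?_
    rwa [mem_support, update_of_ne hji] at hj
  refine ⟨fun h => ?_, update_mem c⟩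
  simpa only [update_idem, update_eq_self] using update_mem (t i) h

theorem cyl_subset_weakUnit [Zero F] {i : ι} {X : Set (ι → F)} (hX : X ⊆ weakUnit F ι) :
    Cyl i X ⊆ weakUnit F ι := by
  classical
  intro s hs
  obtain ⟨c, hc⟩ := mem_cyl_iff_exists_update.1 hs
  exact update_mem_weakUnit_iff.1 (hX hc)

theorem range_coe_finsupp_eq_weakUnit [Zero F] :
    Set.range ((⇑) : (ι →₀ F) → ι → F) = weakUnit F ι :=
  Set.Subset.antisymm (Set.range_subset_iff.2 fun f => f.hasFiniteSupport)
    fun s hs => ⟨Finsupp.ofSupportFinite s hs, rfl⟩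

theorem mk_weakUnit_eq_mk_finsupp [Zero F] : #(weakUnit F ι) = #(ι →₀ F) := by
  rw [← range_coe_finsupp_eq_weakUnit, mk_range_eq _ DFunLike.coe_injective]

theorem mk_weakUnit_eq_max [Zero F] [Nontrivial F] [Nonempty ι] (h : Infinite F ∨ Infinite ι) :
    #(weakUnit F ι) = max (lift.{u} #ι) (lift.{v} #F) := by
  rw [mk_weakUnit_eq_mk_finsupp]
  cases h with
  | inl _ => exact mk_finsupp_lift_of_infinite' ι F
  | inr _ => exact mk_finsupp_lift_of_infinite ι F

theorem lift_mk_index_le_mk_weakUnit [Zero F] [Nontrivial F] :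
    lift.{u} #ι ≤ #(weakUnit F ι) := by
  obtain ⟨a, ha⟩ := exists_ne (0 : F)
  rw [mk_weakUnit_eq_mk_finsupp]
  exact mk_le_of_injective ((Finsupp.single_left_injective ha).comp ULift.down_injective)

theorem exists_update_mem_yset [Field F] [DecidableEq ι] (i₀ i : ι) {t : ι → F}
    (ht : t ∈ weakUnit F ι) : ∃ c, update t i c ∈ yset F ι i₀ := by
  obtain rfl | hi := eq_or_ne i i₀
  · refine ⟨∑ᶠ j ∈ {j | j ≠ i}, t j - 1, update_mem_weakUnit_iff.2 ht, ?_⟩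
    rw [update_self, sub_add_cancel, finsum_mem_update_of_notMem (S := {j | j ≠ i}) fun h => h rfl]
  · refine ⟨t i₀ + 1 - ∑ᶠ j ∈ {j | j ≠ i₀} \ {i}, t j, update_mem_weakUnit_iff.2 ht, ?_⟩
    rw [update_of_ne hi.symm, finsum_mem_update_of_mem hi ht, sub_add_cancel]

end WeakUnit

section Generation

variable {F ι : Type*} [Field F] {i₀ : ι}

theorem Gen.subset_weakUnit {X : Set (ι → F)} (hX : Gen F ι i₀ X) : X ⊆ weakUnit F ι := by
  induction hX with
  | y => exact fun _ hs => hs.1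
  | sing s hs => exact Set.singleton_subset_iff.2 hs.1
  | diag i j => exact Set.inter_subset_right
  | inter _ _ hX _ => exact Set.inter_subset_left.trans hX
  | compl _ _ => exact Set.sdiff_subset
  | cyl i _ hX => exact cyl_subset_weakUnit hX

theorem Gen.cyl_singleton (i : ι) {t : ι → F} (ht : t ∈ weakUnit F ι) :
    Gen F ι i₀ (Cyl i {t}) := by
  classical
  obtain ⟨c, hc⟩ := exists_update_mem_yset i₀ i ht
  rw [← cyl_singleton_update t i c]
  exact .cyl i (.sing _ hc)

theorem Gen.singleton [Nontrivial ι] {t : ι → F} (ht : t ∈ weakUnit F ι) : Gen F ι i₀ {t} := by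
  obtain ⟨i, k, hik⟩ := exists_pair_ne ι
  rw [← cyl_singleton_inter_cyl_singleton hik t]
  exact .inter (.cyl_singleton i ht) (.cyl_singleton k ht)

end Generation

section Cardinality

/-- The symbols, indexed by arity, of the operations under which the weak set algebra is closed;
they are the function symbols of `cylLanguage`. -/
inductive CylSymbol (ι : Type v) : ℕ → Type v
  | inter : CylSymbol ι 2
  | compl : CylSymbol ι 1
  | cyl (i : ι) : CylSymbol ι 1

/-- The language of relativized cylindric set algebras. It exhibits `B` as a generated
substructure, whose size Mathlib bounds. The diagonals are generators rather than constants. -/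
def cylLanguage (ι : Type v) : FirstOrder.Language.{v, 0} :=
  ⟨CylSymbol ι, fun _ => Empty⟩

/-- The interpretation of `cylLanguage ι` in the subsets of `^ιU`, with complements taken
relative to `V`; substructures are the families closed under these operations. -/
@[reducible]
def cylStructure {U : Type u} {ι : Type v} (V : Set (ι → U)) :
    (cylLanguage ι).Structure (Set (ι → U)) where
  funMap
    | CylSymbol.inter, A => A 0 ∩ A 1
    | CylSymbol.compl, A => V \ A 0
    | CylSymbol.cyl i, A => Cyl i (A 0)
  RelMap r := r.elim

theorem mk_cylLanguage_functions_le (ι : Type v) :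
    #(Σ n, (cylLanguage ι).Functions n) ≤ #ι + 1 + 1 := by
  let toSymbol : Option (Option ι) → Σ n, (cylLanguage ι).Functions n
    | none => ⟨2, CylSymbol.inter⟩
    | some none => ⟨1, CylSymbol.compl⟩
    | some (some i) => ⟨1, CylSymbol.cyl i⟩
  have hsurj : Surjective toSymbol := by
    rintro ⟨_, _ | _ | i⟩
    exacts [⟨none, rfl⟩, ⟨some none, rfl⟩, ⟨some (some i), rfl⟩]
  simpa only [mk_option] using mk_le_of_surjective hsurj

variable {F : Type u} {ι : Type v} [Field F]

/-- The generators of the weak set algebra `B`: the set `y`, the singletons of its points, and the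
relativized diagonals. -/
def weakGenerators (F : Type u) (ι : Type v) [Field F] (i₀ : ι) : Set (Set (ι → F)) :=
  insert (yset F ι i₀) ((fun s => {s}) '' yset F ι i₀ ∪
    Set.range fun p : ι × ι => Diag F ι p.1 p.2 ∩ weakUnit F ι)

theorem mk_weakGenerators_le (i₀ : ι) :
    #(weakGenerators F ι i₀) ≤ max ℵ₀ #(weakUnit F ι) := by
  set κ := max ℵ₀ #(weakUnit F ι)
  have hκ : ℵ₀ ≤ κ := le_max_left _ _
  have hι : lift.{u} #ι ≤ κ := lift_mk_index_le_mk_weakUnit.trans (le_max_right _ _)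
  have hdiag : #(Set.range fun p : ι × ι => Diag F ι p.1 p.2 ∩ weakUnit F ι) ≤ κ := by
    refine (mk_le_of_surjective (α := ULift.{u} (ι × ι)) <|
      Set.rangeFactorization_surjective.comp ULift.down_surjective).trans ?_
    rw [mk_uLift, mk_prod, lift_id, lift_mul]
    exact mul_le_of_le hκ hι hι
  have hsing : #((fun s => {s}) '' yset F ι i₀ : Set (Set (ι → F))) ≤ κ :=
    mk_image_le.trans ((mk_le_mk_of_subset fun _ hs => hs.1).trans (le_max_right _ _))
  exact mk_insert_le.trans <| add_le_of_le hκ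
    ((mk_union_le _ _).trans (add_le_of_le hκ hsing hdiag)) (one_le_aleph0.trans hκ)

theorem Gen.mem_closure_weakGenerators {i₀ : ι} {X : Set (ι → F)} (hX : Gen F ι i₀ X) :
    letI := cylStructure (weakUnit F ι)
    X ∈ FirstOrder.Language.Substructure.closure (cylLanguage ι) (weakGenerators F ι i₀) := by
  let := cylStructure (weakUnit F ι)
  let B := FirstOrder.Language.Substructure.closure (cylLanguage ι) (weakGenerators F ι i₀)
  have hbase : weakGenerators F ι i₀ ⊆ B := FirstOrder.Language.Substructure.subset_closure
  induction hX with
  | y => exact hbase (.inl rfl)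
  | sing s hs => exact hbase (.inr (.inl ⟨s, hs, rfl⟩))
  | diag i j => exact hbase (.inr (.inr ⟨(i, j), rfl⟩))
  | @inter X Y _ _ hX hY => exact B.fun_mem CylSymbol.inter ![X, Y] (Fin.forall_fin_two.2 ⟨hX, hY⟩)
  | @compl X _ hX => exact B.fun_mem CylSymbol.compl ![X] (Fin.forall_fin_one.2 hX)
  | @cyl i X _ hX => exact B.fun_mem (CylSymbol.cyl i) ![X] (Fin.forall_fin_one.2 hX)

theorem mk_gen_le (i₀ : ι) :
    #{X : Set (ι → F) // Gen F ι i₀ X} ≤ max ℵ₀ #(weakUnit F ι) := by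
  let := cylStructure (weakUnit F ι)
  set κ := max ℵ₀ #(weakUnit F ι)
  have hsub : #{X : Set (ι → F) // Gen F ι i₀ X} ≤
      #(FirstOrder.Language.Substructure.closure (cylLanguage ι) (weakGenerators F ι i₀)) :=
    mk_le_mk_of_subset fun _ => Gen.mem_closure_weakGenerators
  have hclosure := FirstOrder.Language.Substructure.lift_card_closure_le (L := cylLanguage ι)
    (s := weakGenerators F ι i₀)
  rw [lift_umax.{v, u}, lift_id'.{v, u}, lift_id'.{v, u}] at hclosure
  have hκ : ℵ₀ ≤ κ := le_max_left _ _
  have hone : 1 ≤ κ := one_le_aleph0.trans hκ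
  have hι : lift.{u} #ι ≤ κ := lift_mk_index_le_mk_weakUnit.trans (le_max_right _ _)
  have hsymbols : lift.{u} #(Σ n, (cylLanguage ι).Functions n) ≤ κ := by
    refine (lift_le.2 (mk_cylLanguage_functions_le ι)).trans ?_
    rw [lift_add, lift_add, lift_one]
    exact add_le_of_le hκ (add_le_of_le hκ hι hone) hone
  exact hsub.trans (hclosure.trans
    (max_le hκ (add_le_of_le hκ (mk_weakGenerators_le i₀) hsymbols)))

theorem mk_weakUnit_le_mk_gen [Nontrivial ι] (i₀ : ι) :
    #(weakUnit F ι) ≤ #{X : Set (ι → F) // Gen F ι i₀ X} :=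
  mk_le_of_injective (f := fun t => ⟨{t.1}, .singleton t.2⟩) fun _ _ h =>
    Subtype.ext (Set.singleton_injective (congrArg Subtype.val h))

theorem mk_gen [Nontrivial ι] (i₀ : ι) (h : Infinite F ∨ Infinite ι) :
    #{X : Set (ι → F) // Gen F ι i₀ X} = max (lift.{u} #ι) (lift.{v} #F) := by
  have hV : ℵ₀ ≤ #(weakUnit F ι) := by
    rw [mk_weakUnit_eq_max h, le_max_iff, aleph0_le_lift, aleph0_le_lift, ← infinite_iff,
      ← infinite_iff]
    exact h.symm
  rw [← mk_weakUnit_eq_max h]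
  exact ((mk_gen_le i₀).trans_eq (max_eq_right hV)).antisymm (mk_weakUnit_le_mk_gen i₀)

end Cardinality

theorem weak_set_algebra_singletons_atomic_card_general (F : Type u) [Field F]
    (ι : Type v) [Nontrivial ι] (i₀ : ι) :
    (∀ t ∈ weakUnit F ι, Gen F ι i₀ {t}) ∧
    (∀ X, Gen F ι i₀ X → X.Nonempty → ∃ A, IsAtomOf (Gen F ι i₀) A ∧ A ⊆ X) ∧
    (∀ X, IsAtomOf (Gen F ι i₀) X ↔ ∃ t ∈ weakUnit F ι, X = {t}) ∧
    (Infinite F ∨ Infinite ι →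
      #{X : Set (ι → F) // Gen F ι i₀ X} = max (lift.{u} #ι) (lift.{v} #F)) := by
  have hV : ∀ X, Gen F ι i₀ X → X ⊆ weakUnit F ι := fun _ => Gen.subset_weakUnit
  have hsing : ∀ t ∈ weakUnit F ι, Gen F ι i₀ {t} := fun _ => Gen.singleton
  exact ⟨hsing, fun _ => exists_isAtomOf_subset hV hsing,
    fun _ => isAtomOf_iff_exists_singleton hV hsing, mk_gen i₀⟩

/-- Over a field `F` of characteristic `0` and an index type `ι` with at least two elements,
the generated weak set algebra `B` contains every singleton `{t}`, `t ∈ V`; consequently `B`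
is atomic with atoms exactly the singletons of elements of `V`, and if `|ι| ≤ |F|` then
`|B| = |F|`. -/
theorem weak_set_algebra_singletons_atomic_card (F : Type u) [Field F] [CharZero F]
    (ι : Type u) [Nontrivial ι] (i₀ : ι) :
    (∀ t ∈ weakUnit F ι, Gen F ι i₀ {t}) ∧
    (∀ X : Set (ι → F), Gen F ι i₀ X → X.Nonempty →
      ∃ A : Set (ι → F), (Gen F ι i₀ A ∧ A.Nonempty ∧
        ∀ Y : Set (ι → F), Gen F ι i₀ Y → Y ⊆ A → Y = ∅ ∨ Y = A) ∧ A ⊆ X) ∧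
    (∀ X : Set (ι → F),
      (Gen F ι i₀ X ∧ X.Nonempty ∧
        ∀ Y : Set (ι → F), Gen F ι i₀ Y → Y ⊆ X → Y = ∅ ∨ Y = X) ↔
      ∃ t ∈ weakUnit F ι, X = {t}) ∧
    (Cardinal.mk ι ≤ Cardinal.mk F →
      Cardinal.mk {X : Set (ι → F) // Gen F ι i₀ X} = Cardinal.mk F) := by
  obtain ⟨hsing, hatomic, hatoms, hcard⟩ := weak_set_algebra_singletons_atomic_card_general F ι i₀
  exact ⟨hsing, hatomic, hatoms, fun h => by simpa [h] using hcard (.inl (CharZero.infinite F))⟩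
end

section
/- For all natural numbers k and g there exists a finite simple graph G whose chromatic number is greater than k and whose girth is greater than g. -/
/-! The argument is Erdős' deletion method. Take the binomial random graph on `n = 2Ks` vertices
with edge probability `p = 8K / s`, where `K = k + 1`. The average degree is about `np = 16K²`,
which does not depend on `s`, so the expected number of short cycles stays bounded as `s` grows
and Markov's inequality makes more than `Ks` of them unlikely. A union bound over vertex sets of
size `s` shows that an independent set of size `s` is unlikely too. Hence some graph has fewer
than `Ks` labelled short cycles and no independent set of size `s`. Deleting one vertex from each
of these cycles destroys them all and leaves more than `Ks` vertices; as colour classes are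
independent, `k` colours cannot cover them. -/

open Finset MeasureTheory ProbabilityTheory SimpleGraph unitInterval

section SetBernoulli
variable {ι : Type*} {u : Set ι} {s : Finset ι}

theorem setBernoulli_real_superset (p : I) (hs : ↑s ⊆ u) :
    setBer(u, p).real {t | ↑s ⊆ t} = p ^ #s := by
  have hpi : (fun q : ι → Prop ↦ {i | q i}) ⁻¹' {t | ↑s ⊆ t} = Set.pi s fun _ ↦ {True} := by
    ext; simp [Set.subset_def]
  rw [measureReal_def, setBernoulli_apply', hpi, Measure.infinitePi_pi _ fun _ _ ↦ .of_discrete,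
    prod_eq_pow_card (b := (toNNReal p : ENNReal)) fun i hi ↦ by simp [hs hi]]
  simp

theorem setBernoulli_real_disjoint (p : I) (hs : ↑s ⊆ u) :
    setBer(u, p).real {t | Disjoint ↑s t} = (1 - p) ^ #s := by
  have hpi : (fun q : ι → Prop ↦ {i | q i}) ⁻¹' {t | Disjoint ↑s t} =
      Set.pi s fun _ ↦ {False} := by
    ext; simp [Set.disjoint_left]
  rw [measureReal_def, setBernoulli_apply', hpi, Measure.infinitePi_pi _ fun _ _ ↦ .of_discrete,
    prod_eq_pow_card (b := (toNNReal (σ p) : ENNReal)) fun i hi ↦ by simp [hs hi]]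
  simp

end SetBernoulli

theorem isIndepSet_iff_disjoint_map_top {V : Type*} {G : SimpleGraph V} {s : Set V} :
    G.IsIndepSet s ↔
      Disjoint ((⊤ : SimpleGraph s).map (Function.Embedding.subtype (· ∈ s))) G := by
  rw [← isClique_compl, ← induce_eq_top, ← top_le_iff, SimpleGraph.induce, ← map_le_iff_le_comap,
    le_compl_iff_disjoint_right]

theorem ncard_edgeSet_map {V W : Type*} (f : V ↪ W) (H : SimpleGraph V) :
    (H.map f).edgeSet.ncard = H.edgeSet.ncard := by
  rw [edgeSet_map, Set.ncard_image_of_injective _ f.sym2Map.injective]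

theorem ncard_edgeSet_top {V : Type*} [Fintype V] :
    (⊤ : SimpleGraph V).edgeSet.ncard = (Fintype.card V).choose 2 := by
  classical
  rw [← card_edgeFinset_top_eq_card_choose_two, ← coe_edgeFinset, Set.ncard_coe_finset]

theorem indepNum_induce_le {V : Type*} [Finite V] (G : SimpleGraph V) (s : Set V) :
    (G.induce s).indepNum ≤ G.indepNum := by
  classical
  have := Fintype.ofFinite V
  obtain ⟨T, hT⟩ := (G.induce s).exists_isNIndepSet_indepNum
  rw [← hT.card_eq, ← card_map (Function.Embedding.subtype _)]
  refine IsIndepSet.card_le_indepNum ?_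
  rw [coe_map]
  exact hT.isIndepSet.image

section BinomialRandom
variable {V : Type*}

instance [Finite V] : DiscreteMeasurableSpace (SimpleGraph V) :=
  ⟨fun _ ↦ measurableEmbedding_edgeSet.measurableSet_image.1 .of_discrete⟩

section Countable
variable [Countable V] {H : SimpleGraph V}

theorem binomialRandom_real_Ici (p : I) (hH : H.edgeSet.Finite) :
    G(V, p).real (Set.Ici H) = p ^ H.edgeSet.ncard := by
  have hmeas : MeasurableSet (Set.Ici H) :=
    measurableSet_setOfPred.2 (.forall fun _ ↦ .forall fun _ ↦ .imp (by fun_prop) (by fun_prop))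
  have hpre : fromEdgeSet ⁻¹' Set.Ici H = {t | ↑hH.toFinset ⊆ t} := by ext; simp
  rw [binomialRandom_eq_map, map_measureReal_apply measurable_fromEdgeSet hmeas, hpre,
    setBernoulli_real_superset p (by simp), Set.ncard_eq_toFinset_card _ hH]

theorem binomialRandom_real_disjoint (p : I) (hH : H.edgeSet.Finite) :
    G(V, p).real {G | Disjoint H G} = (1 - p) ^ H.edgeSet.ncard := by
  have hmeas : MeasurableSet {G | Disjoint H G} := by
    simp only [SimpleGraph.disjoint_left]
    exact measurableSet_setOfPred.2
      (.forall fun _ ↦ .forall fun _ ↦ .imp (by fun_prop) (by fun_prop))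
  have hpre : fromEdgeSet ⁻¹' {G | Disjoint H G} = {t | Disjoint ↑hH.toFinset t} := by ext; simp
  rw [binomialRandom_eq_map, map_measureReal_apply measurable_fromEdgeSet hmeas, hpre,
    setBernoulli_real_disjoint p (by simp), Set.ncard_eq_toFinset_card _ hH]

theorem binomialRandom_real_isIndepSet (p : I) (s : Finset V) :
    G(V, p).real {G | G.IsIndepSet s} = (1 - p) ^ (#s).choose 2 := by
  have hfin : ((⊤ : SimpleGraph (s : Set V)).map
      (Function.Embedding.subtype (· ∈ (s : Set V)))).edgeSet.Finite := by
    rw [edgeSet_map]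
    exact (Set.toFinite _).image _
  simp only [isIndepSet_iff_disjoint_map_top]
  rw [binomialRandom_real_disjoint p hfin, ncard_edgeSet_map, ncard_edgeSet_top]
  simp

end Countable

variable [Fintype V]

theorem binomialRandom_real_le_indepNum_le (p : I) (s : ℕ) :
    G(V, p).real {G | s ≤ G.indepNum} ≤ (Fintype.card V).choose s * (1 - p) ^ s.choose 2 := by
  have hcover : {G : SimpleGraph V | s ≤ G.indepNum} ⊆
      ⋃ S ∈ powersetCard s (univ : Finset V), {G | G.IsIndepSet S} := by
    intro G hG
    obtain ⟨T, hT⟩ := G.exists_isNIndepSet_indepNum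
    obtain ⟨S, hST, hS⟩ := exists_subset_card_eq (hT.card_eq.symm ▸ hG : s ≤ #T)
    simp only [mem_powersetCard_univ, Set.mem_iUnion]
    exact ⟨S, hS, hT.isIndepSet.mono hST⟩
  calc
    _ ≤ ∑ S ∈ powersetCard s (univ : Finset V), G(V, p).real {G | G.IsIndepSet S} :=
      (measureReal_mono hcover (measure_ne_top _ _)).trans (measureReal_biUnion_finset_le _ _)
    _ = ∑ _S ∈ powersetCard s (univ : Finset V), (1 - p : ℝ) ^ s.choose 2 :=
      sum_congr rfl fun S hS ↦ by
        rw [binomialRandom_real_isIndepSet, mem_powersetCard_univ.1 hS]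
    _ = _ := by simp

open scoped Classical in
theorem labelledCopyCount_eq_card_filter {W : Type*} [Fintype W]
    (G : SimpleGraph V) (H : SimpleGraph W) :
    G.labelledCopyCount H = #{f : W ↪ V | H.map f ≤ G} := by
  rw [labelledCopyCount, ← Fintype.card_subtype]
  refine Fintype.card_congr (.ofBijective
    (fun φ ↦ ⟨φ.toEmbedding, (map_le_iff_le_comap ..).2 φ.toHom.le_comap⟩)
    ⟨fun φ ψ h ↦ ?_, fun ⟨f, hf⟩ ↦ ?_⟩)
  · ext a
    exact DFunLike.congr_fun (congrArg Subtype.val h) a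
  · exact ⟨⟨⟨f, fun h ↦ (map_le_iff_le_comap ..).1 hf h⟩, f.injective⟩, rfl⟩

theorem integral_labelledCopyCount_binomialRandom {W : Type*} [Fintype W] (p : I)
    (H : SimpleGraph W) :
    ∫ G, (G.labelledCopyCount H : ℝ) ∂G(V, p) =
      (Fintype.card V).descFactorial (Fintype.card W) * p ^ H.edgeSet.ncard := by
  classical
  have hcopy (f : W ↪ V) :
      ∫ G, (Set.Ici (H.map f)).indicator 1 G ∂G(V, p) = (p : ℝ) ^ H.edgeSet.ncard := by
    rw [integral_indicator_one .of_discrete, binomialRandom_real_Ici p (Set.toFinite _),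
      ncard_edgeSet_map]
  calc
    _ = ∫ G, ∑ f : W ↪ V, (Set.Ici (H.map f)).indicator (1 : SimpleGraph V → ℝ) G ∂G(V, p) := by
      simp [labelledCopyCount_eq_card_filter, Set.indicator_apply]
    _ = ∑ _f : W ↪ V, (p : ℝ) ^ H.edgeSet.ncard := by
      simp_rw [integral_finsetSum _ fun _ _ ↦ Integrable.of_finite, hcopy]
    _ = _ := by simp [Fintype.card_embedding_eq]

section Family
variable {ι : Type*} {W : ι → Type*} [∀ i, Fintype (W i)]

theorem binomialRandom_real_le_sum_labelledCopyCount_le (J : Finset ι)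
    (H : ∀ i, SimpleGraph (W i)) (p : I) {c : ℝ} (hc : 0 < c) :
    G(V, p).real {G | c ≤ ∑ i ∈ J, (G.labelledCopyCount (H i) : ℝ)} ≤
      (∑ i ∈ J, (Fintype.card V).descFactorial (Fintype.card (W i)) *
        (p : ℝ) ^ (H i).edgeSet.ncard) / c := by
  rw [le_div_iff₀' hc]
  refine (mul_meas_ge_le_integral_of_nonneg
    (.of_forall fun G ↦ sum_nonneg fun _ _ ↦ Nat.cast_nonneg _) .of_finite c).trans_eq ?_
  simp_rw [integral_finsetSum _ fun _ _ ↦ Integrable.of_finite,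
    integral_labelledCopyCount_binomialRandom]

theorem exists_indepNum_lt_and_sum_labelledCopyCount_lt (J : Finset ι)
    (H : ∀ i, SimpleGraph (W i)) (p : I) (s : ℕ) {c : ℝ} (hc : 0 < c)
    (h : ((Fintype.card V).choose s : ℝ) * (1 - p) ^ s.choose 2 +
      (∑ i ∈ J, (Fintype.card V).descFactorial (Fintype.card (W i)) *
        (p : ℝ) ^ (H i).edgeSet.ncard) / c < 1) :
    ∃ G : SimpleGraph V, G.indepNum < s ∧ ∑ i ∈ J, (G.labelledCopyCount (H i) : ℝ) < c := by
  by_contra! hbad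
  have hcover : ({G | s ≤ G.indepNum} ∪ {G | c ≤ ∑ i ∈ J, (G.labelledCopyCount (H i) : ℝ)} :
      Set (SimpleGraph V)) = Set.univ :=
    Set.eq_univ_of_forall fun G ↦ (le_or_gt s G.indepNum).imp_right (hbad G)
  refine h.not_ge ?_
  calc
    1 = G(V, p).real ({G | s ≤ G.indepNum} ∪
        {G | c ≤ ∑ i ∈ J, (G.labelledCopyCount (H i) : ℝ)}) := by rw [hcover, probReal_univ]
    _ ≤ _ := (measureReal_union_le _ _).trans <| add_le_add
      (binomialRandom_real_le_indepNum_le p s)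
      (binomialRandom_real_le_sum_labelledCopyCount_le J H p hc)

end Family
end BinomialRandom

section Finite
variable {V : Type*} [Fintype V]

theorem exists_card_le_sum_labelledCopyCount_and_free_induce_compl {ι : Type*}
    {W : ι → Type*} [∀ i, Fintype (W i)] [∀ i, Nonempty (W i)] (G : SimpleGraph V) (J : Finset ι)
    (H : ∀ i, SimpleGraph (W i)) :
    ∃ D : Finset V, #D ≤ ∑ i ∈ J, G.labelledCopyCount (H i) ∧
      ∀ i ∈ J, (H i).Free (G.induce (D : Set V)ᶜ) := by
  classical
  let root (i : ι) (φ : Copy (H i) G) : V := φ (Classical.arbitrary (W i))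
  refine ⟨J.biUnion fun i ↦ univ.image (root i),
    card_biUnion_le.trans (sum_le_sum fun i _ ↦ ?_), ?_⟩
  · exact card_image_le.trans_eq (by simp [labelledCopyCount, card_univ])
  · rintro i hi ⟨φ⟩
    refine (φ (Classical.arbitrary (W i))).2 ?_
    exact mem_biUnion.2 ⟨i, hi, mem_image_of_mem (root i) (mem_univ ((Copy.induce G _).comp φ))⟩

theorem card_le_mul_indepNum_of_colorable {G : SimpleGraph V} {k : ℕ} (hG : G.Colorable k) :
    Fintype.card V ≤ k * G.indepNum := by
  classical
  obtain ⟨C⟩ := hG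
  calc
    Fintype.card V = ∑ c, #{v | C v = c} := card_eq_sum_card_fiberwise fun v _ ↦ mem_univ (C v)
    _ ≤ ∑ _c : Fin k, G.indepNum := sum_le_sum fun c _ ↦ IsIndepSet.card_le_indepNum <| by
      rw [coe_filter_univ]
      exact C.isIndepSet_colorClass c
    _ = k * G.indepNum := by simp

end Finite

theorem ncard_edgeSet_cycleGraph_add_three (n : ℕ) :
    (cycleGraph (n + 3)).edgeSet.ncard = n + 3 := by
  have hdeg := (cycleGraph (n + 3)).sum_degrees_eq_twice_card_edges
  simp only [cycleGraph_degree_three_le, sum_const, card_univ, Fintype.card_fin] at hdeg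
  rw [← coe_edgeFinset, Set.ncard_coe_finset]
  lia

theorem add_three_le_egirth_iff {V : Type*} {G : SimpleGraph V} {n : ℕ} :
    ((n + 3 : ℕ) : ℕ∞) ≤ G.egirth ↔ ∀ i < n, (cycleGraph (i + 3)).Free G := by
  rw [le_egirth]
  constructor
  · intro h i hi hc
    obtain ⟨v, w, hw, hl⟩ := (cycleGraph_isContained_iff (by omega)).1 hc
    have hlen : i + 3 ≥ n + 3 := by exact_mod_cast hl ▸ h v w hw
    omega
  · intro h v w hw
    by_contra! hlt
    norm_cast at hlt
    have hthree := hw.three_le_length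
    exact h (w.length - 3) (by omega)
      ((cycleGraph_isContained_iff (by omega)).2 ⟨v, w, hw, by omega⟩)

theorem choose_mul_one_sub_pow_le_half {n s N : ℕ} {p : ℝ} (hp : p ≤ 1) (h : n + 1 ≤ p * N) :
    n.choose s * (1 - p) ^ N ≤ 1 / 2 := by
  have hexp : (2 : ℝ) ^ (n + 1) ≤ Real.exp (p * N) := calc
    (2 : ℝ) ^ (n + 1) ≤ Real.exp 1 ^ (n + 1) := by gcongr; linarith [Real.add_one_le_exp (1 : ℝ)]
    _ = Real.exp (n + 1) := by rw [← Real.exp_nat_mul]; simp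
    _ ≤ _ := Real.exp_le_exp.2 h
  calc
    n.choose s * (1 - p) ^ N ≤ 2 ^ n * Real.exp (-p) ^ N := by
      gcongr
      · exact_mod_cast n.choose_le_two_pow s
      · exact Real.one_sub_le_exp_neg p
    _ = 2 ^ n / Real.exp (p * N) := by
      rw [← Real.exp_nat_mul, div_eq_mul_inv, ← Real.exp_neg, mul_neg, mul_comm p]
    _ ≤ 2 ^ n / 2 ^ (n + 1) := by gcongr
    _ = 1 / 2 := by rw [pow_succ]; field_simp

theorem sum_descFactorial_mul_pow_le {n g : ℕ} {p : ℝ} (h : 1 ≤ n * p) :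
    ∑ i ∈ range g, n.descFactorial (i + 3) * p ^ (i + 3) ≤ g * (n * p) ^ (g + 2) := by
  have hp : 0 ≤ p := (pos_of_mul_pos_right (by linarith) n.cast_nonneg).le
  calc
    _ ≤ ∑ _i ∈ range g, (n * p) ^ (g + 2) := sum_le_sum fun i hi ↦ ?_
    _ = _ := by simp
  calc
    n.descFactorial (i + 3) * p ^ (i + 3) ≤ (n : ℝ) ^ (i + 3) * p ^ (i + 3) := by
      gcongr
      exact_mod_cast n.descFactorial_le_pow _
    _ = (n * p) ^ (i + 3) := (mul_pow ..).symm
    _ ≤ _ := pow_le_pow_right₀ h (by grind)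

theorem exists_choose_mul_add_sum_descFactorial_div_lt_one {K : ℕ} (hK : 0 < K) (g : ℕ) :
    ∃ s : ℕ, 0 < s ∧ ∃ p : I,
      ((2 * K * s).choose s : ℝ) * (1 - p) ^ s.choose 2 +
        (∑ i ∈ range g, (2 * K * s).descFactorial (i + 3) * (p : ℝ) ^ (i + 3)) / (K * s) < 1 := by
  -- The term `8K` gives `p ≤ 1`; the next one makes `Ks` exceed twice the bound on short cycles.
  obtain ⟨s, hs⟩ : ∃ s, s = 8 * K + 2 * g * (16 * K ^ 2) ^ (g + 2) + 1 := ⟨_, rfl⟩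
  have hs0 : (0 : ℝ) < s := by rw [hs]; positivity
  have hK1 : (1 : ℝ) ≤ K := by exact_mod_cast hK
  have hsR : (s : ℝ) = 8 * K + 2 * (g * (16 * K ^ 2) ^ (g + 2)) + 1 := by rw [hs]; push_cast; ring
  have hg0 : (0 : ℝ) ≤ g * (16 * K ^ 2) ^ (g + 2) := by positivity
  have hp1 : 8 * (K : ℝ) / s ≤ 1 := by rw [div_le_one hs0]; linarith
  have hnp : (2 * K * s : ℕ) * (8 * K / s : ℝ) = 16 * K ^ 2 := by push_cast; field_simp; ring
  refine ⟨s, by exact_mod_cast hs0, ⟨8 * K / s, by positivity, hp1⟩, ?_⟩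
  have hindep : ((2 * K * s).choose s : ℝ) * (1 - 8 * K / s) ^ s.choose 2 ≤ 1 / 2 := by
    refine choose_mul_one_sub_pow_le_half hp1 ?_
    rw [Nat.cast_choose_two]
    field_simp
    push_cast
    nlinarith
  have hcycles : (∑ i ∈ range g, (2 * K * s).descFactorial (i + 3) * (8 * K / s : ℝ) ^ (i + 3)) /
      (K * s) < 1 / 2 := by
    rw [div_lt_iff₀ (by positivity)]
    refine (sum_descFactorial_mul_pow_le (by rw [hnp]; nlinarith)).trans_lt ?_
    rw [hnp]
    nlinarith
  linarith

theorem exists_mul_indepNum_lt_card_and_lt_egirth (k g : ℕ) :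
    ∃ (V : Type) (_ : Fintype V) (G : SimpleGraph V),
      k * G.indepNum < Fintype.card V ∧ (g : ℕ∞) < G.egirth := by
  obtain ⟨s, hs, p, hp⟩ := exists_choose_mul_add_sum_descFactorial_div_lt_one k.add_one_pos g
  obtain ⟨G, hindep, hcycles⟩ := exists_indepNum_lt_and_sum_labelledCopyCount_lt
    (V := Fin (2 * (k + 1) * s)) (range g) (fun i ↦ cycleGraph (i + 3)) p s
    (c := (k + 1 : ℕ) * s) (by positivity)
    (by simpa only [Fintype.card_fin, ncard_edgeSet_cycleGraph_add_three] using hp)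
  obtain ⟨D, hD, hfree⟩ := exists_card_le_sum_labelledCopyCount_and_free_induce_compl G (range g)
    fun i ↦ cycleGraph (i + 3)
  refine ⟨_, inferInstance, G.induce (D : Set _)ᶜ, ?_, ?_⟩
  · have hDs : #D < (k + 1) * s := hD.trans_lt (by exact_mod_cast hcycles)
    calc
      k * (G.induce (D : Set _)ᶜ).indepNum ≤ (k + 1) * s := by
        gcongr; exacts [k.le_succ, (indepNum_induce_le G _).trans hindep.le]
      _ < #Dᶜ := by rw [card_compl, Fintype.card_fin]; lia
      _ = _ := by simp [compl_eq_univ_sdiff, sdiff_eq_filter]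
  · refine lt_of_lt_of_le ?_ (add_three_le_egirth_iff.2 fun i hi ↦ hfree i (mem_range.2 hi))
    exact_mod_cast (by lia : g < g + 3)

/-- (Erdős) For all natural numbers `k` and `g` there exists a finite simple graph whose
chromatic number is greater than `k` and whose girth is greater than `g` (both computed in
`ℕ∞`; `SimpleGraph.egirth` is the length of a shortest cycle, `⊤` for acyclic graphs). -/
theorem exists_finite_graph_large_chromaticNumber_large_girth (k g : ℕ) :
    ∃ (V : Type) (_ : Fintype V) (G : SimpleGraph V),
      (k : ℕ∞) < G.chromaticNumber ∧ (g : ℕ∞) < G.egirth := by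
  obtain ⟨V, _, G, hcard, hgirth⟩ := exists_mul_indepNum_lt_card_and_lt_egirth k g
  refine ⟨V, inferInstance, G, lt_of_not_ge fun hk ↦ ?_, hgirth⟩
  exact hcard.not_ge (card_le_mul_indepNum_of_colorable (chromaticNumber_le_iff_colorable.1 hk))
end

section
/- Let B be a Boolean algebra and A ⊆ B a Boolean subalgebra that is dense in B. Then the inclusion of A into B preserves all existing suprema: for every subset X ⊆ A and every a ∈ A, if a is the least upper bound of X computed in A, then a is the least upper bound of X computed in B. In particular, if the supremum of X in A equals ⊤ then the supremum of X in B equals ⊤; i.e., every dense subalgebra is a complete (supremum-preserving) subalgebra. -/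
/-!
If `d ≰ b`, density gives a nonzero `c ≤ d \ b` in the subset, and `cᶜ` lies above `b` but not above
`d`. So every element `b` is the infimum of the members of the subset above it. When `b` is an upper
bound of `X`, all these members are upper bounds of `X` too, hence lie above the supremum of `X`
computed in the subset, and so does their infimum `b`.
-/

/-- A subset of a preorder is meet-dense if every element is the greatest lower bound of the members
of the subset above it. This is what makes suprema computed in the subset remain suprema. -/
def IsMeetDense {α : Type*} [Preorder α] (s : Set α) : Prop :=
  ∀ b, IsGLB (s ∩ Set.Ici b) b

theorem IsMeetDense.isLUB {α : Type*} [Preorder α] {s X : Set α} {a : α} (hs : IsMeetDense s)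
    (ha_ub : a ∈ upperBounds X) (ha_least : a ∈ lowerBounds (s ∩ upperBounds X)) :
    IsLUB X a :=
  ⟨ha_ub, fun b hb ↦ (hs b).2 fun _ ⟨hcs, hbc⟩ ↦
    ha_least ⟨hcs, upperBounds_mono_mem hbc hb⟩⟩

/-- Density of a subset in the sense used for Boolean algebras and forcing: every nonzero element
has a nonzero member of the subset below it. The subset itself may contain `⊥`. -/
def IsOrderDense {α : Type*} [LE α] [OrderBot α] (s : Set α) : Prop :=
  ∀ b : α, b ≠ ⊥ → ∃ a ∈ s, a ≠ ⊥ ∧ a ≤ b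

namespace IsOrderDense

theorem exists_le_disjoint_of_not_le {α : Type*} [GeneralizedBooleanAlgebra α] {s : Set α} {a b : α}
    (hs : IsOrderDense s) (hab : ¬a ≤ b) : ∃ c ∈ s, c ≠ ⊥ ∧ c ≤ a ∧ Disjoint b c := by
  obtain ⟨c, hcs, hc_ne, hc_le⟩ := hs (a \ b) (mt sdiff_eq_bot_iff.mp hab)
  exact ⟨c, hcs, hc_ne, hc_le.trans sdiff_le, disjoint_sdiff_self_right.mono_right hc_le⟩

theorem isMeetDense {α : Type*} [BooleanAlgebra α] {s : Set α} (hs : IsOrderDense s)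
    (hcompl : ∀ a ∈ s, aᶜ ∈ s) : IsMeetDense s := by
  refine fun b ↦ ⟨fun _ hc ↦ hc.2, fun d hd ↦ ?_⟩
  by_contra hdb
  obtain ⟨c, hcs, hc_ne, hcd, hbc⟩ := hs.exists_le_disjoint_of_not_le hdb
  have hd_compl : d ≤ cᶜ := hd ⟨hcompl c hcs, hbc.le_compl_right⟩
  exact hc_ne (le_compl_self.mp (hcd.trans hd_compl))

end IsOrderDense

theorem dense_subalgebra_preserves_suprema_general {B : Type*} [BooleanAlgebra B] {A X : Set B}
    {a : B} (hdense : IsOrderDense A) (hcompl : ∀ c ∈ A, cᶜ ∈ A) (ha_ub : a ∈ upperBounds X)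
    (ha_least : a ∈ lowerBounds (A ∩ upperBounds X)) : IsLUB X a :=
  (hdense.isMeetDense hcompl).isLUB ha_ub ha_least

/-- Let `B` be a Boolean algebra and `A ⊆ B` a Boolean subalgebra (containing `⊥` and `⊤` and
closed under meet, join and complement) that is dense in `B` (below every nonzero element of
`B` there is a nonzero element of `A`).  Then the inclusion of `A` into `B` preserves all
existing suprema: if `a ∈ A` is the least upper bound in `A` of a subset `X ⊆ A`, then `a` is
the least upper bound of `X` in `B`.  In particular every dense subalgebra is a complete
(supremum-preserving) subalgebra. -/
theorem dense_subalgebra_preserves_suprema (B : Type*) [BooleanAlgebra B] (A : Set B)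
    (hbot : ⊥ ∈ A) (htop : ⊤ ∈ A)
    (hinf : ∀ a b : B, a ∈ A → b ∈ A → a ⊓ b ∈ A)
    (hsup : ∀ a b : B, a ∈ A → b ∈ A → a ⊔ b ∈ A)
    (hcompl : ∀ a : B, a ∈ A → aᶜ ∈ A)
    (hdense : ∀ b : B, b ≠ ⊥ → ∃ a ∈ A, a ≠ ⊥ ∧ a ≤ b)
    (X : Set B) (hXA : X ⊆ A) (a : B) (haA : a ∈ A)
    (ha_ub : ∀ x ∈ X, x ≤ a)
    (ha_least : ∀ a' ∈ A, (∀ x ∈ X, x ≤ a') → a ≤ a') :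
    IsLUB X a :=
  dense_subalgebra_preserves_suprema_general hdense hcompl ha_ub
    fun a' ⟨ha'A, ha'_ub⟩ ↦ ha_least a' ha'A ha'_ub
end
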